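/- The building block ρ_T is PPT: for every nonempty finite set T, the matrix ρ_T = ⊗_{e∈T} (I_e − Φ_e) + (d+1)(d−1)^{|T|−1} · ⊗_{e∈T} Φ_e on ⊗_{e∈T} (ℂ^d ⊗ ℂ^d) is positive semidefinite, and its partial transpose ρ_T^{Γ_T} (partial transpose of the first ℂ^d factor of every edge in T) is also positive semidefinite. -/

import Mathlib

open Matrix Finset
open scoped ComplexOrder

/-- The projector onto the maximally entangled state on `ℂ^d ⊗ ℂ^d`. -/
noncomputable def phiM (d : ℕ) : Matrix (Fin d × Fin d) (Fin d × Fin d) ℂ :=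
  Matrix.of fun p q => if p.1 = p.2 ∧ q.1 = q.2 then (1 : ℂ) / d else 0

/-- `Γ_K`: partial transpose of the first `ℂ^d` factor of every edge in `K`. -/
def ptK (d : ℕ) (E : Type*) [DecidableEq E] (K : Finset E)
    (M : Matrix (E → Fin d × Fin d) (E → Fin d × Fin d) ℂ) :
    Matrix (E → Fin d × Fin d) (E → Fin d × Fin d) ℂ :=
  Matrix.of fun x y =>
    M (fun e => if e ∈ K then ((y e).1, (x e).2) else x e)
      (fun e => if e ∈ K then ((x e).1, (y e).2) else y e)

/-- The building block `ρ_T = ⊗_{e∈T}(I_e − Φ_e) + (d+1)(d−1)^{|T|−1}·⊗_{e∈T} Φ_e`. -/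
noncomputable def rhoT (d : ℕ) (T : Type*) [Fintype T] [DecidableEq T] :
    Matrix (T → Fin d × Fin d) (T → Fin d × Fin d) ℂ :=
  Matrix.of fun x y =>
    (∏ e, ((1 : Matrix (Fin d × Fin d) (Fin d × Fin d) ℂ) - phiM d) (x e) (y e))
      + ((d : ℂ) + 1) * ((d : ℂ) - 1) ^ (Fintype.card T - 1) * ∏ e, phiM d (x e) (y e)

/-!
`ρ_T` is a nonnegative combination of tensor powers of the projections `1 - Φ` and `Φ`.

Partial transposition turns `Φ` into `F / d`, where `F` is the swap, a Hermitian involution. Since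
`1 - F / d` and `F / d` are both combinations of the positive semidefinite matrices `1 + F` and
`1 - F`, namely

* `1 - F / d = (1 / (2 * d)) • ((d - 1) • (1 + F) + (d + 1) • (1 - F))`,
* `F / d = (1 / (2 * d)) • ((1 + F) - (1 - F))`,

expanding the tensor powers writes `ρ_T^{Γ_T}` as a combination of tensor products of copies of
`1 + F` and `1 - F`. The product with `i` factors `1 + F` and `j` factors `1 - F` has coefficient
`(d - 1) ^ i * (d + 1) ^ j + (d + 1) * (d - 1) ^ (i + j - 1) * (-1) ^ j`
up to a common positive factor, and this is nonnegative, with equality when `j = 1`.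
-/

section PiKronecker

variable {ι R : Type*} [Fintype ι] {m n l : ι → Type*}

/-- The Kronecker product `⊗_i A i` of a finite family of matrices, with rows and columns indexed by
dependent functions. -/
def piKronecker [CommMonoid R] (A : ∀ i, Matrix (m i) (n i) R) :
    Matrix (∀ i, m i) (∀ i, n i) R :=
  Matrix.of fun x y => ∏ i, A i (x i) (y i)

theorem conjTranspose_piKronecker [CommSemiring R] [StarRing R] (A : ∀ i, Matrix (m i) (n i) R) :
    (piKronecker A)ᴴ = piKronecker fun i => (A i)ᴴ := by
  ext x y
  simp [piKronecker, star_prod]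

theorem piKronecker_mul [CommSemiring R] [DecidableEq ι] [∀ i, Fintype (n i)]
    (A : ∀ i, Matrix (m i) (n i) R) (B : ∀ i, Matrix (n i) (l i) R) :
    (piKronecker fun i => A i * B i) = piKronecker A * piKronecker B := by
  ext x y
  simp only [piKronecker, Matrix.of_apply, Matrix.mul_apply, Fintype.prod_sum,
    Finset.prod_mul_distrib]

theorem piKronecker_const_smul [CommSemiring R] (c : R) (A : ∀ i, Matrix (m i) (n i) R) :
    (piKronecker fun i => c • A i) = c ^ Fintype.card ι • piKronecker A := by
  ext x y
  simp [piKronecker, Finset.prod_mul_distrib]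

theorem piKronecker_smul_add_smul [CommSemiring R] [DecidableEq ι] (a b : R)
    (A B : ∀ i, Matrix (m i) (n i) R) :
    (piKronecker fun i => a • A i + b • B i) =
      ∑ s : Finset ι, (a ^ #s * b ^ #sᶜ) • piKronecker (s.piecewise A B) := by
  ext x y
  have prod_piecewise_apply (s : Finset ι) :
      ∏ i, s.piecewise A B i (x i) (y i) =
        (∏ i ∈ s, A i (x i) (y i)) * ∏ i ∈ sᶜ, B i (x i) (y i) := by
    rw [← Finset.prod_mul_prod_compl s]
    congr 1 <;> refine Finset.prod_congr rfl fun i hi => ?_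
    · rw [Finset.piecewise_eq_of_mem _ _ _ hi]
    · rw [Finset.piecewise_eq_of_notMem _ _ _ (Finset.mem_compl.mp hi)]
  simp only [piKronecker, Matrix.of_apply, Matrix.add_apply, Matrix.smul_apply, Matrix.sum_apply,
    smul_eq_mul, Fintype.prod_add, Finset.prod_mul_distrib, Finset.prod_const,
    prod_piecewise_apply]
  exact Finset.sum_congr rfl fun s _ => mul_mul_mul_comm _ _ _ _

end PiKronecker

section PosSemidef

variable {ι 𝕜 : Type*} [RCLike 𝕜] [Fintype ι] {n : ι → Type*} [∀ i, Finite (n i)]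

open scoped MatrixOrder in
theorem posSemidef_piKronecker {A : ∀ i, Matrix (n i) (n i) 𝕜} (hA : ∀ i, (A i).PosSemidef) :
    (piKronecker A).PosSemidef := by
  classical
  have (i : ι) := Fintype.ofFinite (n i)
  choose B hB using fun i => CStarAlgebra.nonneg_iff_eq_star_mul_self.mp (hA i).nonneg
  obtain rfl : A = fun i => (B i)ᴴ * B i := funext hB
  rw [piKronecker_mul, ← conjTranspose_piKronecker]
  exact Matrix.posSemidef_conjTranspose_mul_self _

theorem posSemidef_piKronecker_add_smul_piKronecker [DecidableEq ι]
    {P Q : ∀ i, Matrix (n i) (n i) 𝕜} (hP : ∀ i, (P i).PosSemidef) (hQ : ∀ i, (Q i).PosSemidef)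
    {a b a' b' c : 𝕜}
    (hcoeff : ∀ s : Finset ι, 0 ≤ a ^ #s * b ^ #sᶜ + c * (a' ^ #s * b' ^ #sᶜ)) :
    ((piKronecker fun i => a • P i + b • Q i) +
      c • piKronecker fun i => a' • P i + b' • Q i).PosSemidef := by
  simp only [piKronecker_smul_add_smul, Finset.smul_sum, smul_smul, ← Finset.sum_add_distrib,
    ← add_smul]
  refine Matrix.posSemidef_sum _ fun s _ => (posSemidef_piKronecker fun i => ?_).smul (hcoeff s)
  by_cases hi : i ∈ s
  · simpa only [Finset.piecewise_eq_of_mem _ _ _ hi] using hP i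
  · simpa only [Finset.piecewise_eq_of_notMem _ _ _ hi] using hQ i

theorem posSemidef_one_add_of_mul_self_eq_one {n : Type*} [Fintype n] [DecidableEq n]
    {F : Matrix n n 𝕜} (hF : F.IsHermitian) (hFF : F * F = 1) : (1 + F).PosSemidef := by
  have eq_half_smul : 1 + F = (2⁻¹ : 𝕜) • ((1 + F)ᴴ * (1 + F)) := by
    rw [Matrix.conjTranspose_add, Matrix.conjTranspose_one, hF.eq, mul_add, mul_one, add_mul,
      one_mul, hFF, add_comm F 1, ← two_smul 𝕜 (1 + F), inv_smul_smul₀ two_ne_zero]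
  rw [eq_half_smul]
  exact (Matrix.posSemidef_conjTranspose_mul_self _).smul (by positivity)

end PosSemidef

section SwapMatrix

variable (n R : Type*) [DecidableEq n]

/-- The swap (flip) operator `F (u ⊗ v) = v ⊗ u` on the tensor square of `R^n`, as a matrix. -/
abbrev swapMatrix [Zero R] [One R] : Matrix (n × n) (n × n) R :=
  Equiv.Perm.permMatrix R (Equiv.prodComm n n)

theorem isHermitian_swapMatrix [CommSemiring R] [StarRing R] : (swapMatrix n R).IsHermitian :=
  Matrix.conjTranspose_permMatrix _

theorem swapMatrix_mul_self [Fintype n] [NonAssocSemiring R] :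
    swapMatrix n R * swapMatrix n R = 1 := by
  rw [← Matrix.permMatrix_mul, ← Matrix.permMatrix_one]
  rfl

variable [Finite n] (𝕜 : Type*) [RCLike 𝕜]

theorem posSemidef_one_add_swapMatrix : (1 + swapMatrix n 𝕜).PosSemidef := by
  have := Fintype.ofFinite n
  exact posSemidef_one_add_of_mul_self_eq_one (isHermitian_swapMatrix n 𝕜) (swapMatrix_mul_self n 𝕜)

theorem posSemidef_one_sub_swapMatrix : (1 - swapMatrix n 𝕜).PosSemidef := by
  have := Fintype.ofFinite n
  rw [sub_eq_add_neg]
  refine posSemidef_one_add_of_mul_self_eq_one (isHermitian_swapMatrix n 𝕜).neg ?_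
  rw [neg_mul_neg, swapMatrix_mul_self]

end SwapMatrix

section PartialTranspose

variable {m n R : Type*}

/-- The partial transpose of a bipartite matrix with respect to the first tensor factor. -/
def partialTranspose (M : Matrix (m × n) (m × n) R) : Matrix (m × n) (m × n) R :=
  Matrix.of fun p q => M (q.1, p.2) (p.1, q.2)

theorem partialTranspose_one [DecidableEq m] [DecidableEq n] [Zero R] [One R] :
    partialTranspose (1 : Matrix (m × n) (m × n) R) = 1 := by
  ext p q
  simp [partialTranspose, Matrix.one_apply, Prod.ext_iff, eq_comm]

theorem partialTranspose_sub [Sub R] (M N : Matrix (m × n) (m × n) R) :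
    partialTranspose (M - N) = partialTranspose M - partialTranspose N := rfl

theorem partialTranspose_phiM (d : ℕ) :
    partialTranspose (phiM d) = (1 / d : ℂ) • swapMatrix (Fin d) ℂ := by
  ext p q
  simp [partialTranspose, phiM, PEquiv.toMatrix_apply, Prod.ext_iff, eq_comm, and_comm]

variable {d : ℕ} {E : Type*} [DecidableEq E]

theorem ptK_add (K : Finset E) (M N : Matrix (E → Fin d × Fin d) (E → Fin d × Fin d) ℂ) :
    ptK d E K (M + N) = ptK d E K M + ptK d E K N := rfl

theorem ptK_smul (K : Finset E) (c : ℂ) (M : Matrix (E → Fin d × Fin d) (E → Fin d × Fin d) ℂ) :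
    ptK d E K (c • M) = c • ptK d E K M := rfl

theorem ptK_piKronecker [Fintype E] (K : Finset E)
    (A : E → Matrix (Fin d × Fin d) (Fin d × Fin d) ℂ) :
    ptK d E K (piKronecker A) =
      piKronecker (K.piecewise (fun e => partialTranspose (A e)) A) := by
  ext x y
  refine Finset.prod_congr rfl fun e _ => ?_
  by_cases he : e ∈ K <;> simp [he, partialTranspose]

end PartialTranspose

theorem isStarProjection_phiM (d : ℕ) : IsStarProjection (phiM d) where
  isIdempotentElem := by
    ext p q
    have hd : (d : ℂ) ≠ 0 := Nat.cast_ne_zero.mpr p.1.pos.ne'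
    by_cases hp : p.1 = p.2 <;> by_cases hq : q.1 = q.2 <;>
      simp [phiM, Matrix.mul_apply, Fintype.sum_prod_type, hp, hq, hd]
  isSelfAdjoint := by
    ext p q
    simp only [phiM, Matrix.star_apply, Matrix.of_apply, and_comm]
    split_ifs <;> simp

open scoped MatrixOrder in
theorem posSemidef_phiM (d : ℕ) : (phiM d).PosSemidef :=
  (isStarProjection_phiM d).nonneg.posSemidef

open scoped MatrixOrder in
theorem posSemidef_one_sub_phiM (d : ℕ) : (1 - phiM d).PosSemidef :=
  (isStarProjection_phiM d).one_sub_nonneg.posSemidef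

theorem partialTranspose_phiM_eq_smul_add_smul (d : ℕ) :
    partialTranspose (phiM d) = (1 / (2 * d) : ℂ) •
      ((1 : ℂ) • (1 + swapMatrix (Fin d) ℂ) + (-1 : ℂ) • (1 - swapMatrix (Fin d) ℂ)) := by
  rw [partialTranspose_phiM]
  module

theorem partialTranspose_one_sub_phiM_eq_smul_add_smul {d : ℕ} (hd : d ≠ 0) :
    partialTranspose (1 - phiM d) = (1 / (2 * d) : ℂ) •
      (((d : ℂ) - 1) • (1 + swapMatrix (Fin d) ℂ) +
        ((d : ℂ) + 1) • (1 - swapMatrix (Fin d) ℂ)) := by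
  rw [partialTranspose_sub, partialTranspose_one, partialTranspose_phiM]
  match_scalars <;> field_simp <;> ring

section OrderedRing

variable {R : Type*} [CommRing R] [PartialOrder R] [IsOrderedRing R]

theorem add_one_mul_sub_one_pow_nonneg {x : R} (hx : 1 ≤ x) (k : ℕ) :
    0 ≤ (x + 1) * (x - 1) ^ k :=
  mul_nonneg (add_nonneg (zero_le_one.trans hx) zero_le_one) (pow_nonneg (sub_nonneg.mpr hx) k)

theorem sub_one_pow_mul_add_one_pow_add_nonneg {x : R} (hx : 1 ≤ x) (i j : ℕ) :
    0 ≤ (x - 1) ^ i * (x + 1) ^ j + (x + 1) * (x - 1) ^ (i + j - 1) * (-1) ^ j := by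
  have hsub : 0 ≤ x - 1 := sub_nonneg.mpr hx
  have hadd : 0 ≤ x + 1 := add_nonneg (zero_le_one.trans hx) zero_le_one
  rcases j.even_or_odd with hj | hj
  · rw [hj.neg_one_pow, mul_one]
    exact add_nonneg (mul_nonneg (pow_nonneg hsub i) (pow_nonneg hadd j))
      (add_one_mul_sub_one_pow_nonneg hx _)
  · obtain ⟨k, rfl⟩ := Nat.exists_eq_add_one.mpr hj.pos
    have hle : x - 1 ≤ x + 1 :=
      (sub_le_self x zero_le_one).trans (le_add_of_nonneg_right zero_le_one)
    have hpow : (x - 1) ^ k ≤ (x + 1) ^ k := pow_le_pow_left₀ hsub hle k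
    calc (0 : R) ≤ (x + 1) * (x - 1) ^ i * ((x + 1) ^ k - (x - 1) ^ k) :=
          mul_nonneg (add_one_mul_sub_one_pow_nonneg hx i) (sub_nonneg.mpr hpow)
      _ = _ := by
          rw [hj.neg_one_pow, ← add_assoc, Nat.add_sub_cancel]
          ring

end OrderedRing

section BuildingBlock

variable (T : Type*) [Fintype T] [DecidableEq T]

theorem rhoT_eq_piKronecker_add_smul_piKronecker (d : ℕ) :
    rhoT d T = (piKronecker fun _ => 1 - phiM d) +
      (((d : ℂ) + 1) * ((d : ℂ) - 1) ^ (Fintype.card T - 1)) • piKronecker fun _ => phiM d :=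
  rfl

theorem posSemidef_rhoT {d : ℕ} (hd : 1 ≤ d) : (rhoT d T).PosSemidef := by
  rw [rhoT_eq_piKronecker_add_smul_piKronecker]
  exact (posSemidef_piKronecker fun _ => posSemidef_one_sub_phiM d).add
    ((posSemidef_piKronecker fun _ => posSemidef_phiM d).smul
      (add_one_mul_sub_one_pow_nonneg (Nat.one_le_cast.mpr hd) _))

theorem ptK_univ_rhoT {d : ℕ} (hd : 1 ≤ d) :
    ptK d T univ (rhoT d T) = (1 / (2 * d) : ℂ) ^ Fintype.card T •
      ((piKronecker fun _ : T => ((d : ℂ) - 1) • (1 + swapMatrix (Fin d) ℂ) +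
          ((d : ℂ) + 1) • (1 - swapMatrix (Fin d) ℂ)) +
        (((d : ℂ) + 1) * ((d : ℂ) - 1) ^ (Fintype.card T - 1)) •
          piKronecker fun _ : T => (1 : ℂ) • (1 + swapMatrix (Fin d) ℂ) +
            (-1 : ℂ) • (1 - swapMatrix (Fin d) ℂ)) := by
  rw [rhoT_eq_piKronecker_add_smul_piKronecker, ptK_add, ptK_smul, ptK_piKronecker,
    ptK_piKronecker, Finset.piecewise_univ, Finset.piecewise_univ,
    partialTranspose_one_sub_phiM_eq_smul_add_smul (Nat.one_le_iff_ne_zero.mp hd),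
    partialTranspose_phiM_eq_smul_add_smul, piKronecker_const_smul,
    piKronecker_const_smul, smul_add ((1 / (2 * d) : ℂ) ^ _), smul_comm]

theorem posSemidef_ptK_univ_rhoT {d : ℕ} (hd : 1 ≤ d) : (ptK d T univ (rhoT d T)).PosSemidef := by
  rw [ptK_univ_rhoT T hd]
  refine (posSemidef_piKronecker_add_smul_piKronecker
    (fun _ => posSemidef_one_add_swapMatrix (Fin d) ℂ)
    (fun _ => posSemidef_one_sub_swapMatrix (Fin d) ℂ) fun K => ?_).smul (by positivity)
  rw [one_pow, one_mul, ← Finset.card_add_card_compl K]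
  exact sub_one_pow_mul_add_one_pow_add_nonneg (Nat.one_le_cast.mpr hd) _ _

end BuildingBlock

/-- For every nonempty finite `T`, the matrix `ρ_T` is positive semidefinite,
and so is its partial transpose `ρ_T^{Γ_T}`. -/
theorem stmt_13 (d : ℕ) (hd : 2 ≤ d) (T : Type*) [Fintype T] [DecidableEq T] [Nonempty T] :
    (rhoT d T).PosSemidef ∧ (ptK d T Finset.univ (rhoT d T)).PosSemidef := by
  have hd1 : 1 ≤ d := one_le_two.trans hd
  exact ⟨posSemidef_rhoT T hd1, posSemidef_ptK_univ_rhoT T hd1⟩
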